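/- Let 0 ≤ a ≤ 1/2 and λ > −a². For every β > 4π, the supremum of ∫_{𝔹²} (e^{β|u|²} − 1)/|x|² dx over all complex-valued u ∈ C_0^∞(𝔹² \ {0}) satisfying ∫_{𝔹²} |∇_A u|² dx + λ ∫_{𝔹²} |u|²/|x|² dx − (1/4) ∫_{𝔹²} |u|²/(|x|² ln²|x|) dx ≤ 1 is infinite; i.e., the constant 4π in the Hardy–Trudinger–Moser inequality on the disk is sharp. -/

import Mathlib

/-!
In the coordinates `(log |x|, θ)` the weight `|x|⁻² dx` becomes Lebesgue measure, so sharpness is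
the local statement that Moser functions concentrating at one point `p ≠ 0` beat every exponent
above `4π`. Take `p = (1/2, 0)`, `s = |x - p|²` and `w = ramp (log (m / (s + ε)))`, where `ramp` is a
smooth positive part. As `w` is real, `|∇_A w|² = |∇w|² + a² w² / |x|²`, and the negative Hardy term
can be dropped. Both `|∇w|²` and `w² / m` are bounded by `4 / (s + ε)` on `s + ε < m` and vanish
elsewhere (`moser_grad_le`, `moser_sq_le`), and the integral of `1 / (s + ε)` over that disk is
`π Λ` with `Λ = log (m / ε)` (`integral_majorant`). Hence the energy of `w` is at most
`4π (1 + m K) Λ`, where `K = 16 (a² + |λ|)` (`energy_testFn_le`).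

Normalize by this bound, with `m` so small that `γ = β / (4π (1 + m K)) > 1`. On `s ≤ ε` one has
`w ≥ Λ - 2` (`le_moser`), so `β |u|² ≥ γ (Λ - 4)` on a square of area `ε = m e^{-Λ}`
(`le_integral_exp_testFn`), and the exponential integral is at least of order
`e^{(γ - 1) Λ}`, which is unbounded as `Λ → ∞`.
-/

open MeasureTheory Real

/-- The squared pointwise norm `|∇_A u|²` of the magnetic gradient
`∇_A u = ∇u + i A u` for the Aharonov–Bohm potential
`A(x) = (a/|x|²)(x₂, -x₁)` on `ℝ² \ {0}`. -/
noncomputable def magGradSq (a : ℝ) (u : ℝ × ℝ → ℂ) (x : ℝ × ℝ) : ℝ :=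
  ‖fderiv ℝ u x (1, 0) + Complex.I * ((a / (x.1 ^ 2 + x.2 ^ 2) * x.2 : ℝ) : ℂ) * u x‖ ^ 2 +
  ‖fderiv ℝ u x (0, 1) + Complex.I * ((a / (x.1 ^ 2 + x.2 ^ 2) * (-x.1) : ℝ) : ℂ) * u x‖ ^ 2

/-- The open unit disk `𝔹² ⊆ ℝ²`. -/
def unitDisk : Set (ℝ × ℝ) := {x : ℝ × ℝ | x.1 ^ 2 + x.2 ^ 2 < 1}

/-! ### A smooth positive part -/

/-- A smooth replacement for the positive part `t ↦ max t 0`: it vanishes for `t ≤ 0`, has slope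
in `[0, 1]`, and has slope `1` for `t ≥ 1`. -/
noncomputable def ramp (t : ℝ) : ℝ := ∫ y in (0 : ℝ)..t, Real.smoothTransition y

theorem hasDerivAt_ramp (t : ℝ) : HasDerivAt ramp (Real.smoothTransition t) t :=
  (Real.smoothTransition.continuous.integral_hasStrictDerivAt 0 t).hasDerivAt

theorem contDiff_ramp : ContDiff ℝ (⊤ : ℕ∞) ramp := by
  rw [contDiff_infty_iff_deriv]
  refine ⟨fun t => (hasDerivAt_ramp t).differentiableAt, ?_⟩
  have : deriv ramp = Real.smoothTransition := funext fun t => (hasDerivAt_ramp t).deriv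
  rw [this]
  exact Real.smoothTransition.contDiff

theorem ramp_of_nonpos {t : ℝ} (ht : t ≤ 0) : ramp t = 0 := by
  unfold ramp
  rw [intervalIntegral.integral_symm, intervalIntegral.integral_congr (g := fun _ => (0 : ℝ))]
  · simp
  · intro y hy
    rw [Set.uIcc_of_le ht] at hy
    exact Real.smoothTransition.zero_of_nonpos hy.2

theorem ramp_nonneg (t : ℝ) : 0 ≤ ramp t := by
  rcases le_total t 0 with ht | ht
  · rw [ramp_of_nonpos ht]
  · exact intervalIntegral.integral_nonneg ht fun y _ => Real.smoothTransition.nonneg y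

theorem ramp_le {t : ℝ} (ht : 0 ≤ t) : ramp t ≤ t := by
  have h : ramp t ≤ ∫ _ in (0 : ℝ)..t, (1 : ℝ) :=
    intervalIntegral.integral_mono_on ht
      (Real.smoothTransition.continuous.intervalIntegrable _ _) (by simp)
      fun y _ => Real.smoothTransition.le_one y
  simpa using h

theorem sub_one_le_ramp {t : ℝ} (ht : 1 ≤ t) : t - 1 ≤ ramp t := by
  have h1 : ∫ y in (1 : ℝ)..t, Real.smoothTransition y = t - 1 := by
    rw [intervalIntegral.integral_congr (g := fun _ => (1 : ℝ))]
    · simp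
    · intro y hy
      rw [Set.uIcc_of_le ht] at hy
      exact Real.smoothTransition.one_of_one_le hy.1
  have h2 : ramp 1 + ∫ y in (1 : ℝ)..t, Real.smoothTransition y = ramp t :=
    intervalIntegral.integral_add_adjacent_intervals
      (Real.smoothTransition.continuous.intervalIntegrable _ _)
      (Real.smoothTransition.continuous.intervalIntegrable _ _)
  have := ramp_nonneg 1
  linarith

/-! ### Smoothed Moser functions -/

/-- The squared Euclidean distance to the concentration point `(1/2, 0)`. -/
noncomputable def sqDist (x : ℝ × ℝ) : ℝ := (x.1 - 1 / 2) ^ 2 + x.2 ^ 2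

theorem sqDist_nonneg (x : ℝ × ℝ) : 0 ≤ sqDist x := by unfold sqDist; positivity

theorem contDiff_sqDist : ContDiff ℝ (⊤ : ℕ∞) sqDist := by unfold sqDist; fun_prop

theorem continuous_sqDist : Continuous sqDist := contDiff_sqDist.continuous

/-- The smoothed Moser function `ramp (log (m / (|x - p|² + ε)))`, `p = (1/2, 0)`, of height about
`log (m / ε)` on the disk `|x - p|² ≤ ε` and vanishing where `|x - p|² + ε ≥ m`. -/
noncomputable def moser (m ε : ℝ) (x : ℝ × ℝ) : ℝ :=
  ramp (Real.log m - Real.log (sqDist x + ε))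

/-- The function `(|x - p|² + ε)⁻¹` cut off to `|x - p|² + ε < m`. Up to constants it dominates
both `|∇ moser|²` and `moser²`. -/
noncomputable def majorant (m ε : ℝ) (x : ℝ × ℝ) : ℝ :=
  if sqDist x + ε < m then (sqDist x + ε)⁻¹ else 0

theorem contDiff_moser (m : ℝ) {ε : ℝ} (hε : 0 < ε) :
    ContDiff ℝ (⊤ : ℕ∞) (moser m ε) := by
  refine contDiff_ramp.comp (contDiff_const.sub (ContDiff.log
    (contDiff_sqDist.add contDiff_const) fun x => ?_))
  have := sqDist_nonneg x
  positivity

theorem moser_eq_zero {m ε : ℝ} (hm : 0 < m) {x : ℝ × ℝ}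
    (hx : m ≤ sqDist x + ε) : moser m ε x = 0 :=
  ramp_of_nonpos (sub_nonpos.2 (Real.log_le_log hm hx))

theorem moser_nonneg (m ε : ℝ) (x : ℝ × ℝ) : 0 ≤ moser m ε x := ramp_nonneg _

/-- The factor `m` makes the zeroth-order terms of the energy negligible against the gradient term
once `m` is small. The bound is `(log y)² ≤ 4 y` for `y = m / (|x - p|² + ε) ≥ 1`. -/
theorem moser_sq_le {m ε : ℝ} (hε : 0 < ε) (hm : 0 < m) (x : ℝ × ℝ) :
    moser m ε x ^ 2 ≤ 4 * m * majorant m ε x := by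
  have hs : 0 < sqDist x + ε := by linarith [sqDist_nonneg x]
  unfold majorant
  split_ifs with h
  · set y := m / (sqDist x + ε) with hy
    have hy0 : 0 < y := by positivity
    -- Halving the logarithm first turns `log y ≤ y - 1` into `log y ≤ 2 √y`.
    have hlog : Real.log m - Real.log (sqDist x + ε) = 2 * Real.log (√y) := by
      rw [Real.log_sqrt hy0.le, hy, Real.log_div hm.ne' hs.ne']; ring
    have h1 : moser m ε x ≤ 2 * Real.log (√y) := by
      rw [← hlog]
      exact ramp_le (sub_nonneg.2 (Real.log_le_log hs h.le))
    have h2 : Real.log (√y) ≤ √y := by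
      linarith [Real.log_le_sub_one_of_pos (Real.sqrt_pos.2 hy0)]
    have h3 : moser m ε x ≤ 2 * √y := by linarith
    calc moser m ε x ^ 2 ≤ (2 * √y) ^ 2 := pow_le_pow_left₀ (moser_nonneg _ _ _) h3 2
      _ = 4 * y := by rw [mul_pow, Real.sq_sqrt hy0.le]; norm_num
      _ = _ := by rw [hy]; ring
  · rw [moser_eq_zero hm (not_lt.1 h)]; simp

theorem hasFDerivAt_moser (m : ℝ) {ε : ℝ} (hε : 0 < ε) (x : ℝ × ℝ) :
    HasFDerivAt (moser m ε)
      ((Real.smoothTransition (Real.log m - Real.log (sqDist x + ε)) *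
          (-(sqDist x + ε)⁻¹)) •
        ((2 * (x.1 - 1 / 2)) • ContinuousLinearMap.fst ℝ ℝ ℝ +
          (2 * x.2) • ContinuousLinearMap.snd ℝ ℝ ℝ)) x := by
  have hs : sqDist x + ε ≠ 0 := by linarith [sqDist_nonneg x]
  have h1 : HasFDerivAt sqDist ((2 * (x.1 - 1 / 2)) • ContinuousLinearMap.fst ℝ ℝ ℝ +
          (2 * x.2) • ContinuousLinearMap.snd ℝ ℝ ℝ) x := by
    have h := ((hasFDerivAt_fst (𝕜 := ℝ) (p := x)).sub_const (1 / 2)).pow 2 |>.add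
      ((hasFDerivAt_snd (𝕜 := ℝ) (p := x)).pow 2)
    have hfun : sqDist = fun x : ℝ × ℝ => (x.1 - 1 / 2) ^ 2 + x.2 ^ 2 := rfl
    rw [hfun]
    simpa [Pi.add_def] using h
  have h2 : HasDerivAt (fun s : ℝ => Real.log m - Real.log (s + ε))
      (-(sqDist x + ε)⁻¹) (sqDist x) := by
    have := (((hasDerivAt_id (sqDist x)).add_const ε).log hs).const_sub (Real.log m)
    simpa using this
  exact ((hasDerivAt_ramp _).comp (sqDist x) h2).comp_hasFDerivAt x h1

/-- The squared gradient is `4 s / (s + ε)²` times the squared slope of `ramp`, where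
`s = |x - p|²`; the slope is at most `1` and vanishes outside the support of `majorant`. -/
theorem moser_grad_le {m ε : ℝ} (hε : 0 < ε) (hm : 0 < m) (x : ℝ × ℝ) :
    fderiv ℝ (moser m ε) x (1, 0) ^ 2 + fderiv ℝ (moser m ε) x (0, 1) ^ 2 ≤
      4 * majorant m ε x := by
  have hs0 := sqDist_nonneg x
  have hs : 0 < sqDist x + ε := by linarith
  rw [(hasFDerivAt_moser m hε x).fderiv]
  set G := Real.smoothTransition (Real.log m - Real.log (sqDist x + ε)) with hG
  have key : ((G * -(sqDist x + ε)⁻¹) •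
        ((2 * (x.1 - 1 / 2)) • ContinuousLinearMap.fst ℝ ℝ ℝ +
          (2 * x.2) • ContinuousLinearMap.snd ℝ ℝ ℝ)) (1, 0) ^ 2 +
      ((G * -(sqDist x + ε)⁻¹) •
        ((2 * (x.1 - 1 / 2)) • ContinuousLinearMap.fst ℝ ℝ ℝ +
          (2 * x.2) • ContinuousLinearMap.snd ℝ ℝ ℝ)) (0, 1) ^ 2 =
      4 * (G ^ 2 * (sqDist x * (sqDist x + ε)⁻¹) * (sqDist x + ε)⁻¹) := by
    simp only [smul_apply, add_apply,
      ContinuousLinearMap.coe_fst', ContinuousLinearMap.coe_snd', smul_eq_mul]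
    generalize (sqDist x + ε)⁻¹ = q
    unfold sqDist
    ring
  rw [key]
  refine mul_le_mul_of_nonneg_left ?_ (by norm_num)
  unfold majorant
  split_ifs with h
  · have hG0 : 0 ≤ G := Real.smoothTransition.nonneg _
    have hG1 : G ≤ 1 := Real.smoothTransition.le_one _
    have h1 : sqDist x * (sqDist x + ε)⁻¹ ≤ 1 := by
      rw [← div_eq_mul_inv, div_le_one hs]; linarith
    have h2 : G ^ 2 * (sqDist x * (sqDist x + ε)⁻¹) ≤ 1 :=
      mul_le_one₀ (pow_le_one₀ hG0 hG1) (by positivity) h1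
    exact mul_le_of_le_one_left (by positivity) h2
  · have : G = 0 := Real.smoothTransition.zero_of_nonpos
      (sub_nonpos.2 (Real.log_le_log hm (not_lt.1 h)))
    simp [this]

/-! ### Integral of the majorant -/

theorem majorant_nonneg {m ε : ℝ} (hε : 0 < ε) (x : ℝ × ℝ) : 0 ≤ majorant m ε x := by
  have := sqDist_nonneg x
  unfold majorant
  split_ifs <;> positivity

theorem isCompact_sqDist_le {m : ℝ} (hm : m ≤ 1 / 16) : IsCompact {x | sqDist x ≤ m} := by
  refine (isCompact_Icc (a := ((0 : ℝ), (-1 : ℝ))) (b := (1, 1))).of_isClosed_subset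
    (isClosed_le continuous_sqDist continuous_const) fun x hx => ?_
  simp only [Set.mem_ofPred_eq, sqDist] at hx
  refine ⟨⟨?_, ?_⟩, ⟨?_, ?_⟩⟩ <;> simp only <;> nlinarith [sq_nonneg (x.1 - 1 / 2), sq_nonneg x.2]

theorem integrable_majorant {m ε : ℝ} (hε : 0 < ε) (hm : m ≤ 1 / 16) :
    Integrable (majorant m ε) := by
  have hset : MeasurableSet {x : ℝ × ℝ | sqDist x + ε < m} :=
    measurableSet_lt (continuous_sqDist.measurable.add_const ε) measurable_const
  have h1 : ContinuousOn (fun x => (sqDist x + ε)⁻¹) {x | sqDist x ≤ m} := by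
    refine ((continuous_sqDist.add continuous_const).continuousOn).inv₀ fun x _ => ?_
    exact (add_pos_of_nonneg_of_pos (sqDist_nonneg x) hε).ne'
  have h2 : IntegrableOn (fun x => (sqDist x + ε)⁻¹) {x : ℝ × ℝ | sqDist x + ε < m} :=
    (h1.integrableOn_compact (isCompact_sqDist_le hm)).mono_set fun x hx => by
      simp only [Set.mem_ofPred_eq] at hx ⊢; linarith
  have h3 : majorant m ε = {x : ℝ × ℝ | sqDist x + ε < m}.indicator
      (fun x => (sqDist x + ε)⁻¹) := by
    ext x; simp [majorant, Set.indicator_apply]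
  rw [h3]
  exact h2.integrable_indicator hset

/-- Polar coordinates around `p` turn the integral into `2π ∫ r / (r² + ε) dr` over
`0 < r < √(m - ε)`. -/
theorem integral_majorant {m ε : ℝ} (hε : 0 < ε) (hεm : ε < m) :
    ∫ x, majorant m ε x = π * (Real.log m - Real.log ε) := by
  set g : ℝ → ℝ := fun s => if s + ε < m then (s + ε)⁻¹ else 0 with hg
  have h1 : ∫ x, majorant m ε x = ∫ x : ℝ × ℝ, g (x.1 ^ 2 + x.2 ^ 2) := by
    rw [← integral_sub_right_eq_self (fun x : ℝ × ℝ => g (x.1 ^ 2 + x.2 ^ 2)) ((1 / 2 : ℝ), (0 : ℝ))]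
    simp [majorant, sqDist, hg]
  have h2 : ∀ p : ℝ × ℝ, p.1 • g ((polarCoord.symm p).1 ^ 2 + (polarCoord.symm p).2 ^ 2) =
      (p.1 * g (p.1 ^ 2)) * 1 := by
    intro p
    have : (p.1 * Real.cos p.2) ^ 2 + (p.1 * Real.sin p.2) ^ 2 = p.1 ^ 2 := by
      linear_combination p.1 ^ 2 * Real.sin_sq_add_cos_sq p.2
    simp [polarCoord_symm_apply, this]
  rw [h1, ← integral_comp_polarCoord_symm, polarCoord_target]
  simp_rw [h2]
  rw [Measure.volume_eq_prod,
    setIntegral_prod_mul (fun r : ℝ => r * g (r ^ 2)) (fun _ : ℝ => (1 : ℝ))]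
  have hR : 0 < m - ε := by linarith
  have h3 : ∫ r in Set.Ioi (0 : ℝ), r * g (r ^ 2) =
      ∫ r in Set.Ioo (0 : ℝ) (√(m - ε)), r * (r ^ 2 + ε)⁻¹ := by
    have : ∀ r ∈ Set.Ioi (0 : ℝ), r * g (r ^ 2) =
        (Set.Iio (√(m - ε))).indicator (fun r => r * (r ^ 2 + ε)⁻¹) r := by
      intro r hr
      have hiff : r ^ 2 + ε < m ↔ r < √(m - ε) := by
        rw [Real.lt_sqrt (le_of_lt hr)]; constructor <;> intro h <;> linarith
      simp only [hg, Set.indicator_apply, Set.mem_Iio, hiff]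
      split_ifs <;> simp
    rw [setIntegral_congr_fun measurableSet_Ioi this, setIntegral_indicator measurableSet_Iio,
      Set.Ioi_inter_Iio]
  have h4 : ∫ r in (0 : ℝ)..(√(m - ε)), r * (r ^ 2 + ε)⁻¹ =
      (1 / 2) * Real.log (√(m - ε) ^ 2 + ε) - (1 / 2) * Real.log ((0 : ℝ) ^ 2 + ε) := by
    refine intervalIntegral.integral_eq_sub_of_hasDerivAt
      (f := fun r : ℝ => (1 / 2) * Real.log (r ^ 2 + ε)) (fun r _ => ?_) ?_
    · have hne : r ^ 2 + ε ≠ 0 := by positivity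
      have := ((((hasDerivAt_id r).pow 2).add_const ε).log hne).const_mul (1 / 2)
      refine this.congr_deriv ?_
      simp only [id, Nat.cast_ofNat, Pi.pow_apply]
      field_simp
      exact pow_one r
    · refine Continuous.intervalIntegrable ?_ _ _
      exact continuous_id.mul (((continuous_pow 2).add continuous_const).inv₀ fun r =>
        (add_pos_of_nonneg_of_pos (sq_nonneg r) hε).ne')
  rw [h3, ← integral_Ioc_eq_integral_Ioo, ← intervalIntegral.integral_of_le (Real.sqrt_nonneg _),
    h4, Real.sq_sqrt hR.le]
  have hpi : -π ≤ π := by linarith [Real.pi_pos]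
  simp [Real.pi_pos.le]
  ring

/-! ### Energy of the test functions -/

theorem bounds_of_sqDist_le {x : ℝ × ℝ} (hx : sqDist x ≤ 1 / 16) :
    1 / 16 ≤ x.1 ^ 2 + x.2 ^ 2 ∧ x.1 ^ 2 + x.2 ^ 2 < 1 := by
  unfold sqDist at hx
  constructor <;> nlinarith [sq_nonneg (x.1 - 1 / 2), sq_nonneg x.2, sq_nonneg (x.1 - 1 / 4)]

theorem moser_sq_div_le {m ε : ℝ} (hε : 0 < ε) (hm : 0 < m) (hm1 : m ≤ 1 / 16) (x : ℝ × ℝ) :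
    moser m ε x ^ 2 / (x.1 ^ 2 + x.2 ^ 2) ≤ 16 * moser m ε x ^ 2 := by
  by_cases h : m ≤ sqDist x + ε
  · simp [moser_eq_zero hm h]
  · have hb := (bounds_of_sqDist_le (x := x) (by linarith)).1
    rw [div_le_iff₀ (by linarith)]
    nlinarith [sq_nonneg (moser m ε x)]

/-- The multiple `k * moser m ε`, as a complex-valued function. -/
noncomputable def testFn (k m ε : ℝ) (x : ℝ × ℝ) : ℂ := ((k * moser m ε x : ℝ) : ℂ)

theorem norm_testFn_sq (k m ε : ℝ) (x : ℝ × ℝ) :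
    ‖testFn k m ε x‖ ^ 2 = k ^ 2 * moser m ε x ^ 2 := by
  rw [testFn, Complex.norm_real, Real.norm_eq_abs, sq_abs, mul_pow]

theorem contDiff_testFn (k m : ℝ) {ε : ℝ} (hε : 0 < ε) :
    ContDiff ℝ (⊤ : ℕ∞) (testFn k m ε) :=
  Complex.ofRealCLM.contDiff.comp (contDiff_const.mul (contDiff_moser m hε))

theorem support_testFn_subset (k : ℝ) {m ε : ℝ} (hε : 0 < ε) (hm : 0 < m) :
    Function.support (testFn k m ε) ⊆ {x | sqDist x ≤ m} := by
  intro x hx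
  by_contra h
  simp only [Set.mem_ofPred_eq, not_le] at h
  exact hx (by simp [testFn, moser_eq_zero hm (by linarith : m ≤ sqDist x + ε)])

/-- For a real-valued function the magnetic term is orthogonal to the gradient, so the magnetic
potential only adds `a² u² / |x|²`. -/
theorem magGradSq_testFn (a k m : ℝ) {ε : ℝ} (hε : 0 < ε) (x : ℝ × ℝ) :
    magGradSq a (testFn k m ε) x =
      k ^ 2 * (fderiv ℝ (moser m ε) x (1, 0) ^ 2 + fderiv ℝ (moser m ε) x (0, 1) ^ 2 +
        a ^ 2 * (moser m ε x ^ 2 / (x.1 ^ 2 + x.2 ^ 2))) := by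
  have hw : HasFDerivAt (moser m ε) (fderiv ℝ (moser m ε) x) x :=
    (hasFDerivAt_moser m hε x).differentiableAt.hasFDerivAt
  have hu : HasFDerivAt (testFn k m ε)
      (Complex.ofRealCLM.comp (k • fderiv ℝ (moser m ε) x)) x :=
    Complex.ofRealCLM.hasFDerivAt.comp x (hw.const_mul k)
  have hn : ∀ d b v : ℝ, ‖(d : ℂ) + Complex.I * (b : ℂ) * (v : ℂ)‖ ^ 2 = d ^ 2 + (b * v) ^ 2 := by
    intro d b v
    rw [Complex.sq_norm, Complex.normSq_apply]
    simp
    ring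
  have hv : ∀ e, (Complex.ofRealCLM.comp (k • fderiv ℝ (moser m ε) x)) e =
      ((k * fderiv ℝ (moser m ε) x e : ℝ) : ℂ) := fun e => by simp
  rw [magGradSq, hu.fderiv, hv, hv, testFn, hn, hn]
  by_cases h0 : x.1 ^ 2 + x.2 ^ 2 = 0
  · simp [h0]; ring
  · field_simp
    ring

/-- The Hardy term has a favourable sign and is discarded. Only the majorant has to be integrable
here, as all integrands are nonnegative. -/
theorem energy_testFn_le (a lam k : ℝ) {m ε : ℝ} (hε : 0 < ε) (hεm : ε < m)
    (hm1 : m ≤ 1 / 16) :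
    (∫ x in unitDisk, magGradSq a (testFn k m ε) x) +
          lam * (∫ x in unitDisk, ‖testFn k m ε x‖ ^ 2 / (x.1 ^ 2 + x.2 ^ 2)) -
          (1 / 4) * ∫ x in unitDisk, ‖testFn k m ε x‖ ^ 2 /
            ((x.1 ^ 2 + x.2 ^ 2) * (Real.log (Real.sqrt (x.1 ^ 2 + x.2 ^ 2))) ^ 2)
        ≤ k ^ 2 * (4 * π * (1 + m * (16 * (a ^ 2 + |lam|))) * (Real.log m - Real.log ε)) := by
  have hm : 0 < m := hε.trans hεm
  set J := ∫ x in unitDisk, majorant m ε x with hJ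
  have hint := integrable_majorant hε hm1
  have hJle : J ≤ π * (Real.log m - Real.log ε) := by
    rw [← integral_majorant hε hεm]
    exact setIntegral_le_integral hint (ae_of_all _ fun x => majorant_nonneg hε x)
  have hsq : ∀ x, moser m ε x ^ 2 / (x.1 ^ 2 + x.2 ^ 2) ≤ 64 * m * majorant m ε x := fun x => by
    linarith [moser_sq_div_le hε hm hm1 x, moser_sq_le hε hm x]
  have h1 : ∫ x in unitDisk, magGradSq a (testFn k m ε) x ≤
      k ^ 2 * (4 + 64 * m * a ^ 2) * J := by
    rw [hJ, ← integral_const_mul]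
    refine integral_mono_of_nonneg (ae_of_all _ fun x => ?_) (hint.integrableOn.const_mul _)
      (ae_of_all _ fun x => ?_)
    · simp only [Pi.zero_apply, magGradSq]; positivity
    · simp only [magGradSq_testFn a k m hε x]
      rw [mul_assoc]
      refine mul_le_mul_of_nonneg_left ?_ (sq_nonneg k)
      nlinarith [moser_grad_le hε hm x, mul_le_mul_of_nonneg_left (hsq x) (sq_nonneg a)]
  have h2n : 0 ≤ ∫ x in unitDisk, ‖testFn k m ε x‖ ^ 2 / (x.1 ^ 2 + x.2 ^ 2) :=
    integral_nonneg fun x => by positivity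
  have h2 : ∫ x in unitDisk, ‖testFn k m ε x‖ ^ 2 / (x.1 ^ 2 + x.2 ^ 2) ≤
      k ^ 2 * (64 * m) * J := by
    rw [hJ, ← integral_const_mul]
    refine integral_mono_of_nonneg (ae_of_all _ fun x => ?_) (hint.integrableOn.const_mul _)
      (ae_of_all _ fun x => ?_)
    · simp only [Pi.zero_apply]; positivity
    · simp only [norm_testFn_sq]
      rw [mul_div_assoc, mul_assoc]
      exact mul_le_mul_of_nonneg_left (hsq x) (sq_nonneg k)
  have h3 : 0 ≤ ∫ x in unitDisk, ‖testFn k m ε x‖ ^ 2 /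
      ((x.1 ^ 2 + x.2 ^ 2) * (Real.log (Real.sqrt (x.1 ^ 2 + x.2 ^ 2))) ^ 2) :=
    integral_nonneg fun x => by positivity
  have h4 := (mul_le_mul_of_nonneg_right (le_abs_self lam) h2n).trans
    (mul_le_mul_of_nonneg_left h2 (abs_nonneg lam))
  have h5 : k ^ 2 * (4 * (1 + m * (16 * (a ^ 2 + |lam|)))) * J ≤
      k ^ 2 * (4 * (1 + m * (16 * (a ^ 2 + |lam|)))) * (π * (Real.log m - Real.log ε)) :=
    mul_le_mul_of_nonneg_left hJle (by positivity)
  linarith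

/-! ### The exponential integral -/

theorem le_moser {m ε : ℝ} (hε : 0 < ε) {x : ℝ × ℝ} (hx : sqDist x ≤ ε)
    (hL : 2 ≤ Real.log m - Real.log ε) :
    Real.log m - Real.log ε - 2 ≤ moser m ε x := by
  have h1 : Real.log (sqDist x + ε) ≤ Real.log 2 + Real.log ε := by
    rw [← Real.log_mul (by norm_num) hε.ne']
    exact Real.log_le_log (by linarith [sqDist_nonneg x]) (by linarith)
  have h2 : Real.log 2 ≤ 1 := by linarith [Real.log_two_lt_d9]
  have h3 := sub_one_le_ramp (t := Real.log m - Real.log (sqDist x + ε)) (by linarith)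
  unfold moser
  linarith

theorem integrable_exp_testFn (β k : ℝ) {m ε : ℝ} (hε : 0 < ε)
    (hm : 0 < m) (hm1 : m ≤ 1 / 16) :
    Integrable (fun x : ℝ × ℝ =>
      (Real.exp (β * ‖testFn k m ε x‖ ^ 2) - 1) / (x.1 ^ 2 + x.2 ^ 2)) := by
  have hc : ContinuousOn (fun x : ℝ × ℝ =>
      (Real.exp (β * ‖testFn k m ε x‖ ^ 2) - 1) / (x.1 ^ 2 + x.2 ^ 2)) {x | sqDist x ≤ m} := by
    have := (contDiff_testFn k m hε).continuous
    refine ContinuousOn.div (by fun_prop) (by fun_prop) fun x hx => ?_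
    have := (bounds_of_sqDist_le (x := x) (le_trans hx hm1)).1
    linarith
  refine (integrableOn_iff_integrable_of_support_subset fun x hx => ?_).1
    (hc.integrableOn_compact (isCompact_sqDist_le hm1))
  refine support_testFn_subset k hε hm fun h0 => hx ?_
  simp [h0]

/-- The integrand is bounded below on the square of side `√ε` centred at `p`, whose area is `ε`. -/
theorem le_integral_exp_testFn {β : ℝ} (hβ : 0 ≤ β) (k : ℝ) {m ε : ℝ} (hε : 0 < ε)
    (hεm : ε < m) (hm1 : m ≤ 1 / 16) (hL : 2 ≤ Real.log m - Real.log ε) :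
    ε * (Real.exp (β * (k ^ 2 * (Real.log m - Real.log ε - 2) ^ 2)) - 1) ≤
      ∫ x in unitDisk, (Real.exp (β * ‖testFn k m ε x‖ ^ 2) - 1) / (x.1 ^ 2 + x.2 ^ 2) := by
  have hm : 0 < m := hε.trans hεm
  set Q : Set (ℝ × ℝ) :=
    Set.Icc (1 / 2 - √ε / 2) (1 / 2 + √ε / 2) ×ˢ Set.Icc (-(√ε / 2)) (√ε / 2) with hQ
  have hse : √ε ^ 2 = ε := Real.sq_sqrt hε.le
  have hs0 : 0 ≤ √ε := Real.sqrt_nonneg ε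
  have hQs : ∀ x ∈ Q, sqDist x ≤ ε := by
    rintro x ⟨⟨h1, h2⟩, h3, h4⟩
    have e1 : (x.1 - 1 / 2) ^ 2 ≤ (√ε / 2) ^ 2 := sq_le_sq' (by linarith) (by linarith)
    have e2 : x.2 ^ 2 ≤ (√ε / 2) ^ 2 := sq_le_sq' (by linarith) (by linarith)
    unfold sqDist
    nlinarith
  have hQm : MeasurableSet Q := measurableSet_Icc.prod measurableSet_Icc
  have hvol : volume.real Q = ε := by
    rw [hQ, Measure.volume_eq_prod, measureReal_prod_prod, Real.volume_real_Icc_of_le (by linarith),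
      Real.volume_real_Icc_of_le (by linarith)]
    linarith
  have hQD : Q ⊆ unitDisk := fun x hx =>
    (bounds_of_sqDist_le ((hQs x hx).trans (by linarith))).2
  have hint := integrable_exp_testFn β k hε hm hm1
  set c := Real.exp (β * (k ^ 2 * (Real.log m - Real.log ε - 2) ^ 2)) - 1 with hc
  have hfin : volume Q ≠ ⊤ := by
    intro h
    rw [measureReal_def, h] at hvol
    simp at hvol
    linarith
  calc ε * c = ∫ _ in Q, c := by rw [setIntegral_const, hvol, smul_eq_mul]
    _ ≤ ∫ x in Q, (Real.exp (β * ‖testFn k m ε x‖ ^ 2) - 1) / (x.1 ^ 2 + x.2 ^ 2) := by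
        refine setIntegral_mono_on (integrableOn_const hfin) hint.integrableOn hQm fun x hx => ?_
        have hb := bounds_of_sqDist_le ((hQs x hx).trans (by linarith : ε ≤ 1 / 16))
        have hw := le_moser (m := m) hε (hQs x hx) hL
        have h1 : c ≤ Real.exp (β * ‖testFn k m ε x‖ ^ 2) - 1 := by
          rw [norm_testFn_sq, hc]
          gcongr
        have h0 : 0 ≤ Real.exp (β * ‖testFn k m ε x‖ ^ 2) - 1 := by
          have : 0 ≤ β * ‖testFn k m ε x‖ ^ 2 := by positivity
          linarith [Real.one_le_exp this]
        exact h1.trans (le_div_self h0 (by linarith) hb.2.le)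
    _ ≤ _ := by
        refine setIntegral_mono_set hint.integrableOn (ae_of_all _ fun x => ?_) hQD.eventuallyLE
        have : 0 ≤ β * ‖testFn k m ε x‖ ^ 2 := by positivity
        have h1 := Real.one_le_exp this
        exact div_nonneg (by linarith) (by positivity)

/-- Sharpness of the constant `4π` in the magnetic Hardy–Trudinger–Moser
inequality on the unit disk: for every `β > 4π` the supremum of
`∫_{𝔹²} (e^{β|u|²} - 1)/|x|² dx` over all `u ∈ C_0^∞(𝔹² \ {0})` with
`∫_{𝔹²} |∇_A u|² + λ ∫_{𝔹²} |u|²/|x|² - (1/4) ∫_{𝔹²} |u|²/(|x|² ln²|x|) ≤ 1`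
is infinite. -/
theorem magnetic_hardy_trudinger_moser_disk_sharp (a lam : ℝ) (ha0 : 0 ≤ a)
    (ha1 : a ≤ 1 / 2) (hlam : -a ^ 2 < lam) :
    ∀ β > 4 * π, ∀ C : ℝ, ∃ u : ℝ × ℝ → ℂ,
      ContDiff ℝ (⊤ : ℕ∞) u ∧ HasCompactSupport u ∧
      tsupport u ⊆ unitDisk \ {((0 : ℝ), (0 : ℝ))} ∧
      (∫ x in unitDisk, magGradSq a u x) +
          lam * (∫ x in unitDisk, ‖u x‖ ^ 2 / (x.1 ^ 2 + x.2 ^ 2)) -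
          (1 / 4) * ∫ x in unitDisk,
            ‖u x‖ ^ 2 / ((x.1 ^ 2 + x.2 ^ 2) * (Real.log (Real.sqrt (x.1 ^ 2 + x.2 ^ 2))) ^ 2)
        ≤ 1 ∧
      C < ∫ x in unitDisk, (Real.exp (β * ‖u x‖ ^ 2) - 1) / (x.1 ^ 2 + x.2 ^ 2) := by

  intro β hβ C
  have hpi := Real.pi_pos
  set K := 16 * (a ^ 2 + |lam|) with hK
  have hK0 : 0 ≤ K := by positivity
  obtain ⟨m, hm, hm1, hmβ⟩ : ∃ m : ℝ, 0 < m ∧ m ≤ 1 / 16 ∧ 4 * π * (1 + m * K) < β := by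
    have hd : 0 < (β - 4 * π) / (4 * π * (K + 1)) := div_pos (by linarith) (by positivity)
    refine ⟨min (1 / 16) ((β - 4 * π) / (4 * π * (K + 1))), lt_min (by norm_num) hd,
      min_le_left _ _, ?_⟩
    set m := min (1 / 16) ((β - 4 * π) / (4 * π * (K + 1))) with hm
    have hm0 : 0 < m := lt_min (by norm_num) hd
    have h := (le_div_iff₀ (by positivity)).1 (min_le_right (1 / 16) ((β - 4 * π) / (4 * π * (K + 1))))
    rw [← hm] at h
    have : 0 < m * π := by positivity
    nlinarith
  set D := 4 * π * (1 + m * K) with hD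
  have hD0 : 0 < D := by positivity
  set γ := β / D with hγ
  have hγ1 : 1 < γ := (one_lt_div hD0).2 hmβ
  -- `m * exp ((γ - 1) * Λ - 4 * γ)` is, up to a bounded error, the lower bound for the integral
  -- obtained below; this size of `Λ` makes it exceed `C`.
  obtain ⟨Λ, hΛ3, hΛ⟩ : ∃ Λ : ℝ, 3 ≤ Λ ∧ C / m + 1 + 4 * γ ≤ (γ - 1) * Λ := by
    refine ⟨max 3 ((C / m + 1 + 4 * γ) / (γ - 1)), le_max_left _ _, ?_⟩
    have h := le_max_right 3 ((C / m + 1 + 4 * γ) / (γ - 1))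
    rw [div_le_iff₀ (by linarith)] at h
    linarith
  have hΛ0 : 0 < Λ := by linarith
  set ε := m * Real.exp (-Λ) with hε_def
  have hε : 0 < ε := by positivity
  have hεm : ε < m := mul_lt_of_lt_one_right hm (Real.exp_lt_one_iff.2 (by linarith))
  have hlog : Real.log m - Real.log ε = Λ := by
    rw [hε_def, Real.log_mul hm.ne' (Real.exp_pos _).ne', Real.log_exp]; ring
  -- By `energy_testFn_le` this normalization makes the energy at most `1`.
  set k := (√(D * Λ))⁻¹ with hk
  have hk2 : k ^ 2 = (D * Λ)⁻¹ := by rw [hk, inv_pow, Real.sq_sqrt (by positivity)]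
  have hcpt := isCompact_sqDist_le hm1
  have hsupp := support_testFn_subset k hε hm
  refine ⟨testFn k m ε, contDiff_testFn k m hε,
    HasCompactSupport.of_support_subset_isCompact hcpt hsupp, fun x hx => ?_, ?_, ?_⟩
  · have hxm : sqDist x ≤ m := closure_minimal hsupp hcpt.isClosed hx
    have hb := bounds_of_sqDist_le (hxm.trans hm1)
    refine ⟨hb.2, fun h => ?_⟩
    rw [Set.mem_singleton_iff] at h
    norm_num [h] at hb
  · refine (energy_testFn_le a lam k hε hεm hm1).trans ?_
    rw [hlog, ← hK, ← hD, hk2, inv_mul_cancel₀ (by positivity)]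
  · refine lt_of_lt_of_le ?_ (le_integral_exp_testFn (by linarith) k hε hεm hm1 (by linarith))
    rw [hlog, hk2]
    have h1 : γ * (Λ - 4) ≤ β * ((D * Λ)⁻¹ * (Λ - 2) ^ 2) := by
      have : β * ((D * Λ)⁻¹ * (Λ - 2) ^ 2) = γ * (Λ - 4 + 4 / Λ) := by
        rw [hγ]; field_simp; ring
      rw [this]
      refine mul_le_mul_of_nonneg_left ?_ (by linarith)
      have : 0 < 4 / Λ := by positivity
      linarith
    have h2 : C / m + 1 ≤ γ * (Λ - 4) - Λ := by linarith
    have h3 : C / m + 2 ≤ Real.exp (-Λ) * Real.exp (γ * (Λ - 4)) := by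
      rw [← Real.exp_add]
      linarith [Real.add_one_le_exp (-Λ + γ * (Λ - 4))]
    have h4 : Real.exp (-Λ) ≤ 1 := Real.exp_le_one_iff.2 (by linarith)
    calc C < m * (C / m + 1) := by rw [mul_add, mul_div_cancel₀ _ hm.ne']; linarith
      _ ≤ m * (Real.exp (-Λ) * Real.exp (γ * (Λ - 4)) - Real.exp (-Λ)) := by gcongr; linarith
      _ = ε * (Real.exp (γ * (Λ - 4)) - 1) := by rw [hε_def]; ring
      _ ≤ _ := by gcongr
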